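/- Let Y be a squared-Bessel process of dimension δ > 0 started at y ≥ 0, let α ≥ 0, γ > −α, and A_t = ∫_1^t s^γ Y_s^α ds. Then almost surely lim_{t→∞} (log A_t)/(log t) = 1 + γ + α. -/

import Mathlib

open MeasureTheory Filter Set

/-- `Y` is a squared-Bessel process of dimension `δ` started at `y`, characterized via the
martingale problem: `Y_t - y - δ t` is a martingale with quadratic variation `4∫_0^t Y_s ds`. -/
structure IsBESQ {Ω : Type*} {m : MeasurableSpace Ω} (μ : Measure Ω)
    (ℱ : Filtration ℝ m) (δ y : ℝ) (Y : ℝ → Ω → ℝ) : Prop where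
  nonneg : ∀ t ω, 0 ≤ Y t ω
  cont : ∀ ω, Continuous fun t => Y t ω
  init : ∀ ω, Y 0 ω = y
  adapted : Adapted ℱ Y
  integrable_sq : ∀ t : ℝ, Integrable (fun ω => (Y t ω) ^ 2) μ
  mart : ∀ s t : ℝ, 0 ≤ s → s ≤ t →
    (μ[(fun ω => Y t ω - y - δ * t) | ℱ s]) =ᵐ[μ] fun ω => Y s ω - y - δ * s
  qv : ∀ s t : ℝ, 0 ≤ s → s ≤ t →
    (μ[(fun ω => (Y t ω - y - δ * t) ^ 2 - 4 * ∫ u in (0:ℝ)..t, Y u ω) | ℱ s])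
      =ᵐ[μ] fun ω => (Y s ω - y - δ * s) ^ 2 - 4 * ∫ u in (0:ℝ)..s, Y u ω

section BESQ

set_option linter.unusedSectionVars false

variable {Ω : Type*} {m : MeasurableSpace Ω} {μ : Measure Ω} [IsProbabilityMeasure μ]
    {ℱ : Filtration ℝ m} {δ y : ℝ} {Y : ℝ → Ω → ℝ}

lemma prod_integrable {S : Type*} [MeasurableSpace S] (ν : Measure S) [IsFiniteMeasure ν]
    (F : Ω × S → ℝ) (hF : Measurable F) (C : ℝ)
    (h1 : ∀ᵐ z ∂ν, Integrable (fun ω => F (ω, z)) μ)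
    (h2 : ∀ᵐ z ∂ν, ∫ ω, |F (ω, z)| ∂μ ≤ C) : Integrable F (μ.prod ν) := by
  rw [integrable_prod_iff' hF.aestronglyMeasurable]
  refine ⟨h1, ?_⟩
  refine Integrable.mono' (integrable_const C) ?_ ?_
  · exact (hF.norm.stronglyMeasurable.integral_prod_left').aestronglyMeasurable
  · filter_upwards [h2] with z hz
    rw [Real.norm_eq_abs, abs_of_nonneg (integral_nonneg fun ω => norm_nonneg _)]
    exact hz

lemma IsBESQ.meas (hY : IsBESQ μ ℱ δ y Y) (t : ℝ) : Measurable (Y t) :=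
  (hY.adapted t).mono (ℱ.le t) le_rfl

lemma IsBESQ.memLp (hY : IsBESQ μ ℱ δ y Y) (t : ℝ) : MemLp (Y t) 2 μ :=
  (memLp_two_iff_integrable_sq (hY.meas t).aestronglyMeasurable).2 (hY.integrable_sq t)

lemma IsBESQ.integrable (hY : IsBESQ μ ℱ δ y Y) (t : ℝ) : Integrable (Y t) μ :=
  (hY.memLp t).integrable (by norm_num)

lemma IsBESQ.memLp_M (hY : IsBESQ μ ℱ δ y Y) (t : ℝ) :
    MemLp (fun ω => Y t ω - y - δ * t) 2 μ :=
  ((hY.memLp t).sub (memLp_const y)).sub (memLp_const (δ * t))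

lemma IsBESQ.integrable_M (hY : IsBESQ μ ℱ δ y Y) (t : ℝ) :
    Integrable (fun ω => Y t ω - y - δ * t) μ :=
  (hY.memLp_M t).integrable (by norm_num)

lemma IsBESQ.mean (hY : IsBESQ μ ℱ δ y Y) (t : ℝ) (ht : 0 ≤ t) :
    ∫ ω, Y t ω ∂μ = y + δ * t := by
  have h1 := integral_condExp (μ := μ) (f := fun ω => Y t ω - y - δ * t) (ℱ.le 0)
  rw [integral_congr_ae (hY.mart 0 t le_rfl ht)] at h1
  simp only [hY.init] at h1
  have i1 : Integrable (fun ω => Y t ω - y) μ := (hY.integrable t).sub (integrable_const y)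
  rw [integral_sub i1 (integrable_const _),
    integral_sub (hY.integrable t) (integrable_const y)] at h1
  simp at h1
  linarith

lemma IsBESQ.meas_uncurry (hY : IsBESQ μ ℱ δ y Y) : Measurable (Function.uncurry Y) :=
  measurable_uncurry_of_continuous_of_measurable hY.cont hY.meas

lemma IsBESQ.second (hδ : 0 < δ) (hy : 0 ≤ y) (hY : IsBESQ μ ℱ δ y Y) (t : ℝ) (ht : 0 ≤ t) :
    ∫ ω, (Y t ω - y - δ * t) ^ 2 ∂μ ≤ 4 * (t * (y + δ * t)) := by
  set ν : Measure ℝ := volume.restrict (Ioc 0 t) with hν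
  have hm : Measurable (fun z : Ω × ℝ => Y z.2 z.1) := hY.meas_uncurry.comp measurable_swap
  have hint : Integrable (fun z : Ω × ℝ => Y z.2 z.1) (μ.prod ν) := by
    refine prod_integrable ν _ hm (y + δ * t) (ae_of_all _ fun s => hY.integrable s) ?_
    filter_upwards [ae_restrict_mem measurableSet_Ioc] with s hs
    simp only [abs_of_nonneg (hY.nonneg s _)]
    rw [hY.mean s hs.1.le]
    gcongr
    exact hs.2
  have e : ∀ ω, ∫ u in (0:ℝ)..t, Y u ω = ∫ u, Y u ω ∂ν := fun ω =>
    intervalIntegral.integral_of_le ht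
  have hI : Integrable (fun ω => ∫ u in (0:ℝ)..t, Y u ω) μ := by
    simp only [e]
    exact hint.integral_prod_left
  have hI2 : ∫ ω, (∫ u in (0:ℝ)..t, Y u ω) ∂μ ≤ t * (y + δ * t) := by
    simp only [e]
    rw [integral_integral_swap hint]
    calc ∫ u, (∫ ω, Y u ω ∂μ) ∂ν ≤ ∫ u, (y + δ * t) ∂ν := by
          apply integral_mono_ae hint.integral_prod_right (integrable_const _)
          filter_upwards [ae_restrict_mem measurableSet_Ioc] with s hs
          rw [hY.mean s hs.1.le]
          gcongr
          exact hs.2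
      _ = t * (y + δ * t) := by simp [hν, ht]
  have h1 := integral_condExp (μ := μ)
    (f := fun ω => (Y t ω - y - δ * t) ^ 2 - 4 * ∫ u in (0:ℝ)..t, Y u ω) (ℱ.le 0)
  rw [integral_congr_ae (hY.qv 0 t le_rfl ht),
    integral_sub (hY.memLp_M t).integrable_sq (hI.const_mul 4), integral_const_mul] at h1
  simp [hY.init] at h1
  linarith

lemma IsBESQ.cov (hY : IsBESQ μ ℱ δ y Y) (s t : ℝ) (hs : 0 ≤ s) (hst : s ≤ t) :
    ∫ ω, (Y s ω - y - δ * s) * (Y t ω - y - δ * t) ∂μ = ∫ ω, (Y s ω - y - δ * s) ^ 2 ∂μ := by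
  have hm : StronglyMeasurable[ℱ s] (fun ω => Y s ω - y - δ * s) :=
    (((hY.adapted s).sub_const y).sub_const (δ * s)).stronglyMeasurable
  have hi := MemLp.integrable_mul (hY.memLp_M s) (hY.memLp_M t)
  have h1 := condExp_mul_of_stronglyMeasurable_left hm hi (hY.integrable_M t)
  have h2 := integral_condExp (μ := μ)
    (f := (fun ω => Y s ω - y - δ * s) * (fun ω => Y t ω - y - δ * t)) (ℱ.le s)
  have h3 : ∫ ω, (Y s ω - y - δ * s) * (Y t ω - y - δ * t) ∂μ =
    ∫ ω, ((fun ω => Y s ω - y - δ * s) * (fun ω => Y t ω - y - δ * t)) ω ∂μ := rfl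
  rw [h3, ← h2]
  apply integral_congr_ae
  filter_upwards [h1, hY.mart s t hs hst] with ω a b
  rw [a, Pi.mul_apply, b]
  ring

lemma max_int (s T : ℝ) (hs : 1 ≤ s) (hsT : s ≤ T) :
    ∫ u in (1:ℝ)..T, 1 / (max s u) ^ 2 ≤ 2 * s⁻¹ := by
  have hs0 : 0 < s := by linarith
  have hc : Continuous (fun u : ℝ => 1 / (max s u) ^ 2) := by
    apply Continuous.div continuous_const (by fun_prop)
    intro u
    have : 0 < max s u := lt_max_of_lt_left hs0
    positivity
  rw [← intervalIntegral.integral_add_adjacent_intervals (hc.intervalIntegrable 1 s)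
    (hc.intervalIntegrable s T)]
  have a1 : ∫ u in (1:ℝ)..s, 1 / (max s u) ^ 2 = (s - 1) * (1 / s ^ 2) := by
    rw [intervalIntegral.integral_congr (g := fun _ => 1 / s ^ 2)]
    · simp
    · intro u hu
      rw [uIcc_of_le hs] at hu
      simp only
      rw [max_eq_left hu.2]
  have a2 : ∫ u in s..T, 1 / (max s u) ^ 2 = s⁻¹ - T⁻¹ := by
    rw [intervalIntegral.integral_congr (g := fun u => u ^ (-2 : ℤ))]
    · rw [integral_zpow]
      · norm_num
        ring
      · right
        refine ⟨by norm_num, ?_⟩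
        rw [uIcc_of_le hsT]
        intro h
        linarith [h.1]
    · intro u hu
      rw [uIcc_of_le hsT] at hu
      simp only
      rw [max_eq_right hu.1, zpow_neg, one_div]
      norm_cast
  rw [a1, a2]
  have : 0 < T⁻¹ := by
    have : 0 < T := by linarith
    positivity
  have : (s - 1) * (1 / s ^ 2) ≤ s⁻¹ := by
    calc (s - 1) * (1 / s ^ 2) ≤ s * (1 / s ^ 2) := by gcongr; linarith
      _ = s⁻¹ := by field_simp
  linarith

lemma IsBESQ.G_bound (hδ : 0 < δ) (hy : 0 ≤ y) (hY : IsBESQ μ ℱ δ y Y) (T : ℝ) (hT : 1 ≤ T) :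
    Integrable (fun ω => (∫ s in (1:ℝ)..T, (Y s ω - y - δ * s) / s ^ 2) ^ 2) μ ∧
    ∫ ω, (∫ s in (1:ℝ)..T, (Y s ω - y - δ * s) / s ^ 2) ^ 2 ∂μ ≤
      8 * (y + δ) * Real.log T := by
  set ν : Measure ℝ := volume.restrict (Ioc 1 T) with hν
  set C := 4 * (y + δ) with hC
  have hC0 : 0 ≤ C := by positivity
  have hM2 : ∀ s, 1 ≤ s → ∫ ω, (Y s ω - y - δ * s) ^ 2 ∂μ ≤ C * s ^ 2 := by
    intro s hs
    refine (hY.second hδ hy s (by linarith)).trans ?_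
    have : y * 1 ≤ y * s := by gcongr
    have : s * (y + δ * s) ≤ s * (y * s + δ * s) := by gcongr; linarith
    rw [hC]
    nlinarith
  set g : Ω → ℝ → ℝ := fun ω s => (Y s ω - y - δ * s) / s ^ 2 with hg
  have hmem : ∀ s, MemLp (fun ω => g ω s) 2 μ := by
    intro s
    simp only [hg, div_eq_mul_inv]
    exact (hY.memLp_M s).mul_const _
  have hgm : Measurable (fun z : Ω × ℝ => g z.1 z.2) := by
    have hm : Measurable (fun z : Ω × ℝ => Y z.2 z.1) := hY.meas_uncurry.comp measurable_swap
    exact ((hm.sub_const y).sub (measurable_snd.const_mul δ)).div (measurable_snd.pow_const 2)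
  set F : Ω × (ℝ × ℝ) → ℝ := fun z => g z.1 z.2.1 * g z.1 z.2.2 with hF
  have hFm : Measurable F := by
    apply Measurable.mul
    · exact hgm.comp (measurable_fst.prodMk (measurable_fst.comp measurable_snd))
    · exact hgm.comp (measurable_fst.prodMk (measurable_snd.comp measurable_snd))
  have hae : ∀ᵐ z ∂(ν.prod ν), (1 ≤ z.1 ∧ z.1 ≤ T) ∧ (1 ≤ z.2 ∧ z.2 ≤ T) := by
    rw [hν, Measure.prod_restrict]
    filter_upwards [ae_restrict_mem (measurableSet_Ioc.prod measurableSet_Ioc)] with z hz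
    exact ⟨⟨hz.1.1.le, hz.1.2⟩, ⟨hz.2.1.le, hz.2.2⟩⟩
  have hg2 : ∀ s, 1 ≤ s → ∫ ω, g ω s ^ 2 ∂μ ≤ C / s ^ 2 := by
    intro s hs
    have hs0 : 0 < s := by linarith
    simp only [hg, div_pow, integral_div]
    rw [div_le_div_iff₀ (by positivity) (by positivity)]
    have := hM2 s hs
    calc _ ≤ (C * s ^ 2) * s ^ 2 := by gcongr
      _ = _ := by ring
  have hFi : Integrable F (μ.prod (ν.prod ν)) := by
    refine prod_integrable (ν.prod ν) F hFm C
      (ae_of_all _ fun z => MemLp.integrable_mul (hmem z.1) (hmem z.2)) ?_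
    filter_upwards [hae] with z hz
    have i1 := (hmem z.1).integrable_sq
    have i2 := (hmem z.2).integrable_sq
    have hb : ∀ s, 1 ≤ s → C / s ^ 2 ≤ C := fun s hs => div_le_self hC0 (one_le_pow₀ hs)
    calc ∫ ω, |F (ω, z)| ∂μ ≤ ∫ ω, (g ω z.1 ^ 2 + g ω z.2 ^ 2) / 2 ∂μ := by
          apply integral_mono (MemLp.integrable_mul (hmem z.1) (hmem z.2)).abs
            ((i1.add i2).div_const 2)
          intro ω
          change |g ω z.1 * g ω z.2| ≤ (g ω z.1 ^ 2 + g ω z.2 ^ 2) / 2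
          rw [abs_le]
          constructor <;> nlinarith [sq_nonneg (g ω z.1 - g ω z.2), sq_nonneg (g ω z.1 + g ω z.2)]
      _ = ((∫ ω, g ω z.1 ^ 2 ∂μ) + ∫ ω, g ω z.2 ^ 2 ∂μ) / 2 := by
          rw [integral_div, integral_add i1 i2]
      _ ≤ C := by
          linarith [hg2 _ hz.1.1, hg2 _ hz.2.1, hb _ hz.1.1, hb _ hz.2.1]
  have e : ∀ ω, (∫ s in (1:ℝ)..T, (Y s ω - y - δ * s) / s ^ 2) ^ 2 =
      ∫ z, F (ω, z) ∂(ν.prod ν) := by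
    intro ω
    rw [intervalIntegral.integral_of_le hT, sq]
    exact (integral_prod_mul (μ := ν) (ν := ν) (g ω) (g ω)).symm
  have hcov : ∀ s u, 1 ≤ s → 1 ≤ u → ∫ ω, g ω s * g ω u ∂μ ≤ C * (1 / (max s u) ^ 2) := by
    have main : ∀ s u, 1 ≤ s → s ≤ u → ∫ ω, g ω s * g ω u ∂μ ≤ C * (1 / u ^ 2) := by
      intro s u hs hsu
      have hs0 : 0 < s := by linarith
      have hu0 : 0 < u := by linarith
      have : ∀ ω, g ω s * g ω u =
          (Y s ω - y - δ * s) * (Y u ω - y - δ * u) / (s ^ 2 * u ^ 2) := by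
        intro ω
        simp only [hg]
        field_simp
      simp only [this, integral_div]
      rw [hY.cov s u hs0.le hsu, div_le_iff₀ (by positivity)]
      refine (hM2 s hs).trans (le_of_eq ?_)
      field_simp
    intro s u hs hu
    rcases le_total s u with h | h
    · rw [max_eq_right h]; exact main s u hs h
    · rw [max_eq_left h]
      simp only [mul_comm (g _ s)]
      exact main u s hu h
  have hh : Integrable (fun z : ℝ × ℝ => C * (1 / (max z.1 z.2) ^ 2)) (ν.prod ν) := by
    refine Integrable.mono' (integrable_const C) ?_ ?_
    · apply Measurable.aestronglyMeasurable
      fun_prop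
    · filter_upwards [hae] with z hz
      have : 1 ≤ max z.1 z.2 := le_max_of_le_left hz.1.1
      rw [Real.norm_eq_abs, abs_of_nonneg (by positivity)]
      rw [mul_one_div]
      exact div_le_self hC0 (one_le_pow₀ this)
  simp only [e]
  refine ⟨hFi.integral_prod_left, ?_⟩
  rw [integral_integral_swap (f := fun ω z => F (ω, z)) hFi]
  calc ∫ z, (∫ ω, F (ω, z) ∂μ) ∂(ν.prod ν) ≤ ∫ z, C * (1 / (max z.1 z.2) ^ 2) ∂(ν.prod ν) := by
        apply integral_mono_ae hFi.integral_prod_right hh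
        filter_upwards [hae] with z hz
        exact hcov z.1 z.2 hz.1.1 hz.2.1
    _ = ∫ s, ∫ u, C * (1 / (max s u) ^ 2) ∂ν ∂ν := integral_prod _ hh
    _ ≤ ∫ s, C * (2 * s⁻¹) ∂ν := by
        apply integral_mono_ae hh.integral_prod_left
        · have : IntervalIntegrable (fun s : ℝ => C * (2 * s⁻¹)) volume 1 T := by
            refine ContinuousOn.intervalIntegrable ?_
            refine continuousOn_const.mul (continuousOn_const.mul (continuousOn_id.inv₀ ?_))
            intro x hx
            rw [uIcc_of_le hT] at hx
            simp only [id]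
            linarith [hx.1]
          exact this.1
        · filter_upwards [ae_restrict_mem measurableSet_Ioc] with s hs
          rw [integral_const_mul]
          have := max_int s T hs.1.le hs.2
          rw [intervalIntegral.integral_of_le hT] at this
          gcongr
    _ = 8 * (y + δ) * Real.log T := by
        rw [integral_const_mul, integral_const_mul, hν, ← intervalIntegral.integral_of_le hT,
          integral_inv_of_pos (by norm_num) (by linarith), hC]
        simp
        ring

lemma IsBESQ.grid_bound (hY : IsBESQ μ ℱ δ y Y) (hδ : 0 < δ)
    (h lam : ℝ) (hh : 0 ≤ h) (hlam : 0 < lam) (n : ℕ) :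
    μ {ω | ∃ k ≤ n, lam < Y (k * h) ω} ≤ ENNReal.ofReal ((y + δ * (n * h)) / lam) := by
  let 𝒢 : Filtration ℕ m :=
    { seq := fun k => ℱ (k * h)
      mono' := fun i j hij => ℱ.mono (by gcongr)
      le' := fun i => ℱ.le _ }
  have hsub : Submartingale (fun k : ℕ => Y (k * h)) 𝒢 μ := by
    refine ⟨fun k => (hY.adapted _).stronglyMeasurable, fun i j hij => ?_, fun k => hY.integrable _⟩
    have hij' : (i:ℝ) * h ≤ j * h := by gcongr
    have h1 := hY.mart (i * h) (j * h) (by positivity) hij'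
    have e : (fun ω => Y (j * h) ω) =
        (fun ω => Y (j * h) ω - y - δ * (j * h)) + (fun _ => y + δ * (j * h)) := by
      funext ω; simp
    have h2 := condExp_add (m := ℱ (i * h)) (hY.integrable_M (j * h))
      (integrable_const (μ := μ) (y + δ * (j * h)))
    rw [← e, condExp_const (ℱ.le _)] at h2
    change Y (i * h) ≤ᵐ[μ] μ[(fun ω => Y (j * h) ω) | ℱ (i * h)]
    filter_upwards [h1, h2] with ω a b
    rw [b, Pi.add_apply, a]
    have : δ * (i * h) ≤ δ * (j * h) := by gcongr
    linarith
  have hmax := maximal_ineq hsub (fun k ω => hY.nonneg _ ω) (ε := ⟨lam, hlam.le⟩) n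
  set S := {ω | ((⟨lam, hlam.le⟩ : NNReal) : ℝ) ≤ (Finset.range (n + 1)).sup'
    Finset.nonempty_range_add_one fun k => Y (k * h) ω} with hS
  have hsubset : {ω | ∃ k ≤ n, lam < Y (k * h) ω} ⊆ S := by
    rintro ω ⟨k, hk, hl⟩
    rw [hS, mem_ofPred_eq]
    exact hl.le.trans (Finset.le_sup' (fun k : ℕ => Y (k * h) ω)
      (Finset.mem_range.2 (Nat.lt_succ_of_le hk)))
  refine (measure_mono hsubset).trans ?_
  have hle : ∫ ω in S, Y (n * h) ω ∂μ ≤ y + δ * (n * h) := by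
    rw [← hY.mean (n * h) (by positivity)]
    exact setIntegral_le_integral (hY.integrable _) (ae_of_all _ fun ω => hY.nonneg _ ω)
  rw [ENNReal.ofReal_div_of_pos hlam, ENNReal.le_div_iff_mul_le (Or.inl (by simp [hlam]))
    (Or.inl (by simp)), mul_comm]
  refine le_trans (le_of_eq ?_) (hmax.trans (ENNReal.ofReal_le_ofReal hle))
  congr 1
  rw [ENNReal.ofReal, Real.toNNReal_of_nonneg hlam.le]
  rfl

lemma IsBESQ.sup_bound (hY : IsBESQ μ ℱ δ y Y) (hδ : 0 < δ)
    (T lam : ℝ) (hT : 0 < T) (hlam : 0 < lam) :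
    μ {ω | ∃ s, 0 ≤ s ∧ s ≤ T ∧ lam < Y s ω} ≤ ENNReal.ofReal ((y + δ * T) / lam) := by
  set S : ℕ → Set Ω := fun j => {ω | ∃ k : ℕ, k ≤ 2 ^ j ∧ lam < Y (k * (T / 2 ^ j)) ω} with hS
  have hmono : Monotone S := by
    apply monotone_nat_of_le_succ
    rintro j ω ⟨k, hk, hl⟩
    refine ⟨2 * k, by rw [pow_succ]; omega, ?_⟩
    convert hl using 2
    push_cast
    rw [pow_succ]
    field_simp
  have hsub : {ω | ∃ s, 0 ≤ s ∧ s ≤ T ∧ lam < Y s ω} ⊆ ⋃ j, S j := by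
    rintro ω ⟨s, hs0, hsT, hl⟩
    have hpow : Tendsto (fun j : ℕ => (2:ℝ) ^ j) atTop atTop :=
      tendsto_pow_atTop_atTop_of_one_lt (by norm_num)
    have t1 := (tendsto_nat_floor_mul_div_atTop (R := ℝ) (a := s / T) (by positivity)).comp hpow
    have t2 : Tendsto (fun j : ℕ => (⌊s / T * 2 ^ j⌋₊ : ℝ) * (T / 2 ^ j)) atTop (nhds s) := by
      have := t1.mul_const T
      rw [div_mul_cancel₀ _ hT.ne'] at this
      refine this.congr fun j => ?_
      simp only [Function.comp]
      ring
    have t3 := ((hY.cont ω).tendsto s).comp t2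
    obtain ⟨j, hj⟩ := (t3.eventually (lt_mem_nhds hl)).exists
    refine mem_iUnion.2 ⟨j, ⌊s / T * 2 ^ j⌋₊, ?_, hj⟩
    apply Nat.floor_le_of_le
    push_cast
    have : s / T ≤ 1 := (div_le_one hT).2 hsT
    calc s / T * 2 ^ j ≤ 1 * 2 ^ j := by gcongr
      _ = 2 ^ j := one_mul _
  refine (measure_mono hsub).trans ?_
  rw [hmono.measure_iUnion]
  refine iSup_le fun j => ?_
  refine (hY.grid_bound hδ (T / 2 ^ j) lam (by positivity) hlam (2 ^ j)).trans (le_of_eq ?_)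
  congr 3
  push_cast
  field_simp

lemma IsBESQ.growth (hY : IsBESQ μ ℱ δ y Y) (hδ : 0 < δ) (hy : 0 ≤ y) (ε : ℝ) (hε : 0 < ε) :
    ∀ᵐ ω ∂μ, ∃ K, ∀ s, 1 ≤ s → Y s ω ≤ K * s ^ (1 + ε) := by
  set S : ℕ → Set Ω := fun n => {ω | ∃ s, 0 ≤ s ∧ s ≤ Real.exp n ∧ Real.exp n ^ (1 + ε) < Y s ω}
    with hS
  have hsum : ∑' n, μ (S n) ≠ ⊤ := by
    have hb : ∀ n, μ (S n) ≤ ENNReal.ofReal ((y + δ) * Real.exp (-ε) ^ n) := by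
      intro n
      refine (hY.sup_bound hδ (Real.exp n) _ (Real.exp_pos _) (by positivity)).trans ?_
      apply ENNReal.ofReal_le_ofReal
      rw [div_le_iff₀ (by positivity), ← Real.exp_nat_mul, ← Real.exp_mul, mul_assoc,
        ← Real.exp_add]
      have e : (n:ℝ) * -ε + n * (1 + ε) = n := by ring
      rw [e]
      have : 1 ≤ Real.exp n := Real.one_le_exp (Nat.cast_nonneg n)
      nlinarith
    refine ne_top_of_le_ne_top ?_ (ENNReal.tsum_le_tsum hb)
    refine Summable.tsum_ofReal_ne_top ?_
    exact (summable_geometric_of_lt_one (Real.exp_pos _).le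
      (by rw [← Real.exp_zero]; exact Real.exp_lt_exp.2 (by linarith))).mul_left _
  filter_upwards [ae_eventually_notMem hsum] with ω hω
  obtain ⟨N, hN⟩ := eventually_atTop.1 hω
  refine ⟨Real.exp (N + 1) ^ (1 + ε), fun s hs => ?_⟩
  have hs0 : 0 < s := by linarith
  have hl : 0 ≤ Real.log s := Real.log_nonneg hs
  have h1 := hN (N + ⌈Real.log s⌉₊) (by omega)
  have c1 : Real.log s ≤ ⌈Real.log s⌉₊ := Nat.le_ceil _
  have c2 : (⌈Real.log s⌉₊ : ℝ) < Real.log s + 1 := Nat.ceil_lt_add_one hl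
  simp only [hS, mem_ofPred_eq, not_exists, not_and, not_lt] at h1
  have hle : s ≤ Real.exp ((N + ⌈Real.log s⌉₊ : ℕ) : ℝ) := by
    rw [← Real.log_le_iff_le_exp hs0]
    push_cast
    have : (0:ℝ) ≤ N := Nat.cast_nonneg N
    linarith
  refine (h1 s hs0.le hle).trans ?_
  rw [← Real.mul_rpow (by positivity) hs0.le]
  apply Real.rpow_le_rpow (by positivity) _ (by linarith)
  calc Real.exp ((N + ⌈Real.log s⌉₊ : ℕ) : ℝ) ≤ Real.exp (N + 1 + Real.log s) := by
        apply Real.exp_le_exp.2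
        push_cast
        linarith
    _ = _ := by rw [Real.exp_add, Real.exp_log hs0]

lemma IsBESQ.G_tendsto (hY : IsBESQ μ ℱ δ y Y) (hδ : 0 < δ) (hy : 0 ≤ y) :
    ∀ᵐ ω ∂μ, Tendsto (fun j : ℕ => (∫ s in (1:ℝ)..Real.exp ((j ^ 2 : ℕ) : ℝ),
      (Y s ω - y - δ * s) / s ^ 2) / ((j ^ 2 : ℕ) : ℝ)) atTop (nhds 0) := by
  set G : ℕ → Ω → ℝ := fun j ω => (∫ s in (1:ℝ)..Real.exp ((j ^ 2 : ℕ) : ℝ),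
      (Y s ω - y - δ * s) / s ^ 2) / ((j ^ 2 : ℕ) : ℝ) with hG
  have hT : ∀ j : ℕ, 1 ≤ Real.exp ((j ^ 2 : ℕ) : ℝ) := fun j => Real.one_le_exp (Nat.cast_nonneg _)
  have hint : ∀ j, Integrable (fun ω => G j ω ^ 2) μ := by
    intro j
    simp only [hG, div_pow]
    exact (hY.G_bound hδ hy _ (hT j)).1.div_const _
  have hb : ∀ j, ∫⁻ ω, ENNReal.ofReal (G j ω ^ 2) ∂μ ≤
      ENNReal.ofReal (8 * (y + δ) * (1 / (j:ℝ) ^ 2)) := by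
    intro j
    rw [← ofReal_integral_eq_lintegral_ofReal (hint j) (ae_of_all _ fun ω => sq_nonneg _)]
    apply ENNReal.ofReal_le_ofReal
    simp only [hG, div_pow, integral_div]
    have := (hY.G_bound hδ hy _ (hT j)).2
    rw [Real.log_exp] at this
    rcases Nat.eq_zero_or_pos j with h0 | h0
    · subst h0; simp
    · have : (0:ℝ) < j := by exact_mod_cast h0
      rw [div_le_iff₀ (by positivity)]
      refine (hY.G_bound hδ hy _ (hT j)).2.trans (le_of_eq ?_)
      rw [Real.log_exp]
      push_cast
      field_simp
  have hsum : ∑' j, ∫⁻ ω, ENNReal.ofReal (G j ω ^ 2) ∂μ ≠ ⊤ := by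
    refine ne_top_of_le_ne_top ?_ (ENNReal.tsum_le_tsum hb)
    refine Summable.tsum_ofReal_ne_top ?_
    exact (Real.summable_one_div_nat_pow.2 (by norm_num)).mul_left _
  have hm : ∀ j, AEMeasurable (fun ω => ENNReal.ofReal (G j ω ^ 2)) μ := fun j =>
    (hint j).aemeasurable.ennreal_ofReal
  rw [← lintegral_tsum hm] at hsum
  filter_upwards [ae_lt_top' (AEMeasurable.tsum hm) hsum] with ω hω
  have h1 := ENNReal.tendsto_atTop_zero_of_tsum_ne_top hω.ne
  have h2 := (ENNReal.tendsto_toReal (by simp)).comp h1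
  simp only [Function.comp_def, ENNReal.toReal_ofReal (sq_nonneg _), ENNReal.toReal_zero] at h2
  have h3 := h2.sqrt
  simp only [Real.sqrt_sq_eq_abs, Real.sqrt_zero] at h3
  exact (tendsto_zero_iff_abs_tendsto_zero _).2 h3

lemma IsBESQ.X_tendsto (hY : IsBESQ μ ℱ δ y Y) (hδ : 0 < δ) (hy : 0 ≤ y) :
    ∀ᵐ ω ∂μ, Tendsto (fun n : ℕ => (∫ s in (1:ℝ)..Real.exp n, Y s ω / s ^ 2) / n) atTop
      (nhds δ) := by
  filter_upwards [hY.G_tendsto hδ hy] with ω hω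
  have hT : ∀ n : ℕ, 1 ≤ Real.exp (n : ℝ) := fun j => Real.one_le_exp (Nat.cast_nonneg _)
  have hne : ∀ n : ℕ, ∀ x ∈ uIcc 1 (Real.exp n), x ≠ 0 := by
    intro n x hx
    rw [uIcc_of_le (hT n)] at hx
    linarith [hx.1]
  have hint : ∀ n : ℕ, IntervalIntegrable (fun s => Y s ω / s ^ 2) volume 1 (Real.exp n) :=
    fun n => (ContinuousOn.div (hY.cont ω).continuousOn (by fun_prop)
      (fun x hx => pow_ne_zero 2 (hne n x hx))).intervalIntegrable
  have hX : ∀ n : ℕ, ∫ s in (1:ℝ)..Real.exp n, Y s ω / s ^ 2 =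
      (∫ s in (1:ℝ)..Real.exp n, (Y s ω - y - δ * s) / s ^ 2) +
        y * (1 - (Real.exp n)⁻¹) + δ * n := by
    intro n
    have i2 : IntervalIntegrable (fun s : ℝ => y * s ^ (-2 : ℤ)) volume 1 (Real.exp n) :=
      (ContinuousOn.mul continuousOn_const (continuousOn_id.zpow₀ _
        (fun x hx => Or.inl (hne n x hx)))).intervalIntegrable
    have i3 : IntervalIntegrable (fun s : ℝ => δ * s⁻¹) volume 1 (Real.exp n) :=
      (ContinuousOn.mul continuousOn_const (continuousOn_id.inv₀ (hne n))).intervalIntegrable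
    have e : ∫ s in (1:ℝ)..Real.exp n, (Y s ω - y - δ * s) / s ^ 2 =
        ∫ s in (1:ℝ)..Real.exp n, (Y s ω / s ^ 2 - y * s ^ (-2 : ℤ) - δ * s⁻¹) := by
      apply intervalIntegral.integral_congr
      intro s hs
      have := hne n s hs
      simp only
      rw [zpow_neg]
      norm_cast
      field_simp
    have z0 : (0:ℝ) ∉ uIcc 1 (Real.exp n) := fun h => hne n 0 h rfl
    rw [e, intervalIntegral.integral_sub ((hint n).sub i2) i3,
      intervalIntegral.integral_sub (hint n) i2, intervalIntegral.integral_const_mul,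
      intervalIntegral.integral_const_mul, integral_zpow (Or.inr ⟨by norm_num, z0⟩),
      integral_inv z0]
    norm_num
    ring
  apply tendsto_div_of_monotone_of_exists_subseq_tendsto_div
  · intro i j hij
    refine intervalIntegral.integral_mono_interval le_rfl (hT i)
      (Real.exp_le_exp.2 (by exact_mod_cast hij)) ?_ (hint j)
    exact ae_of_all _ fun s => div_nonneg (hY.nonneg s ω) (sq_nonneg s)
  · intro a ha
    have hsq : Tendsto (fun n : ℕ => n ^ 2) atTop atTop := tendsto_pow_atTop (by norm_num)
    refine ⟨fun n => n ^ 2, ?_, hsq, ?_⟩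
    · have h1 : Tendsto (fun n : ℕ => (((n:ℝ) + 1) / n) ^ 2) atTop (nhds (1 ^ 2)) := by
        apply Tendsto.pow
        have := (tendsto_const_nhds (x := (1:ℝ))).add (tendsto_one_div_atTop_nhds_zero_nat (𝕜 := ℝ))
        rw [add_zero] at this
        refine this.congr' ?_
        filter_upwards [eventually_gt_atTop 0] with n hn
        have : (0:ℝ) < n := by exact_mod_cast hn
        field_simp
      rw [one_pow] at h1
      filter_upwards [h1.eventually (gt_mem_nhds ha), eventually_gt_atTop 0] with n h2 hn
      have : (0:ℝ) < n := by exact_mod_cast hn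
      rw [div_pow, div_lt_iff₀ (by positivity)] at h2
      push_cast
      exact h2.le
    · have hc : Tendsto (fun n : ℕ => ((n ^ 2 : ℕ) : ℝ)) atTop atTop :=
        tendsto_natCast_atTop_atTop.comp hsq
      have h1 : Tendsto (fun n : ℕ => (y * (1 - (Real.exp ((n ^ 2 : ℕ) : ℝ))⁻¹)) /
          ((n ^ 2 : ℕ) : ℝ)) atTop (nhds 0) := by
        refine Tendsto.div_atTop (a := y * (1 - 0)) ?_ hc
        exact ((tendsto_const_nhds.sub
          (tendsto_inv_atTop_zero.comp (Real.tendsto_exp_atTop.comp hc))).const_mul y)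
      have h2 := (hω.add h1).add_const δ
      rw [zero_add, zero_add] at h2
      refine h2.congr' ?_
      filter_upwards [eventually_gt_atTop 0] with n hn
      have : (0:ℝ) < ((n ^ 2 : ℕ) : ℝ) := by exact_mod_cast pow_pos hn 2
      rw [hX]
      field_simp

end BESQ

lemma aux_z (η B α z : ℝ) (hη : 0 < η) (hB : 1 ≤ B) (hα : 0 ≤ α) (hz : 0 ≤ z) (hzB : z ≤ B) :
    z ≤ η + max 1 (η ^ (1 - α)) * B * z ^ α := by
  have hza : 0 ≤ z ^ α := Real.rpow_nonneg hz α
  have hm : (1 : ℝ) ≤ max 1 (η ^ (1 - α)) := le_max_left _ _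
  have hm2 : η ^ (1 - α) ≤ max 1 (η ^ (1 - α)) := le_max_right _ _
  rcases le_or_gt z η with h | h
  · have : 0 ≤ max 1 (η ^ (1 - α)) * B * z ^ α := by positivity
    linarith
  · have hz0 : 0 < z := hη.trans h
    have e : z = z ^ (1 - α) * z ^ α := by
      rw [← Real.rpow_add hz0]; simp
    have key : z ^ (1 - α) ≤ max 1 (η ^ (1 - α)) * B := by
      rcases le_total α 1 with h1 | h1
      · calc z ^ (1 - α) ≤ B ^ (1 - α) := Real.rpow_le_rpow hz hzB (by linarith)
          _ ≤ B ^ (1 : ℝ) := Real.rpow_le_rpow_of_exponent_le hB (by linarith)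
          _ = 1 * B := by simp
          _ ≤ _ := by gcongr
      · calc z ^ (1 - α) ≤ η ^ (1 - α) :=
              Real.rpow_le_rpow_of_nonpos hη h.le (by linarith)
          _ ≤ max 1 (η ^ (1 - α)) * 1 := by simp
          _ ≤ _ := by gcongr
    calc z = z ^ (1 - α) * z ^ α := e
      _ ≤ max 1 (η ^ (1 - α)) * B * z ^ α := by gcongr
      _ ≤ _ := by linarith

lemma aux_cont (f : ℝ → ℝ) (hf : Continuous f) (α γ : ℝ) (hα : 0 ≤ α) (a b : ℝ) (ha : 1 ≤ a)
    (hb : 1 ≤ b) : ContinuousOn (fun s => s ^ γ * f s ^ α) (uIcc a b) := by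
  apply ContinuousOn.mul
  · apply ContinuousOn.rpow_const continuousOn_id
    intro x hx
    left
    have := hx.1
    have : 1 ≤ x := (le_min ha hb).trans this
    simp; linarith
  · exact (hf.rpow_const (fun x => Or.inr hα)).continuousOn

lemma det_upper (f : ℝ → ℝ) (hf : Continuous f) (hf0 : ∀ s, 0 ≤ f s) (α γ : ℝ) (hα : 0 ≤ α)
    (hγ : -α < γ) (ε K : ℝ) (hε : 0 < ε) (hK : 0 ≤ K) (h : ∀ s, 1 ≤ s → f s ≤ K * s ^ (1 + ε))
    (t : ℝ) (ht : 1 ≤ t) :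
    ∫ s in (1:ℝ)..t, s ^ γ * (f s) ^ α ≤ K ^ α * t ^ (1 + γ + α + α * ε) := by
  have : ∀ s ∈ Icc 1 t, s ^ γ * (f s) ^ α ≤ K ^ α * t ^ (γ + α + α * ε) := by
    intro s hs
    have hs0 : 0 < s := by linarith [hs.1]
    calc s ^ γ * (f s) ^ α ≤ s ^ γ * (K * s ^ (1 + ε)) ^ α := by
          gcongr
          · exact hf0 s
          · exact h s hs.1
      _ = K ^ α * s ^ (γ + α + α * ε) := by
          rw [Real.mul_rpow hK (by positivity), ← Real.rpow_mul hs0.le, mul_left_comm,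
            ← Real.rpow_add hs0]
          congr 2; ring
      _ ≤ _ := by
          gcongr
          · have : 0 ≤ α * ε := by positivity
            linarith
          · exact hs.2
  calc ∫ s in (1:ℝ)..t, s ^ γ * (f s) ^ α ≤ ∫ s in (1:ℝ)..t, K ^ α * t ^ (γ + α + α * ε) :=
        intervalIntegral.integral_mono_on ht
          (aux_cont f hf α γ hα 1 t le_rfl ht).intervalIntegrable (by simp) this
    _ = (t - 1) * (K ^ α * t ^ (γ + α + α * ε)) := by simp; ring
    _ ≤ t * (K ^ α * t ^ (γ + α + α * ε)) := by gcongr; linarith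
    _ = K ^ α * t ^ (1 + γ + α + α * ε) := by
        have e := Real.rpow_add (show 0 < t by linarith) 1 (γ + α + α * ε)
        rw [show 1 + γ + α + α * ε = 1 + (γ + α + α * ε) by ring, e, Real.rpow_one]
        ring

lemma det_step (f : ℝ → ℝ) (hf : Continuous f) (hf0 : ∀ s, 0 ≤ f s) (α γ : ℝ) (hα : 0 ≤ α)
    (hγ : -α < γ) (B η : ℝ) (hB : 1 ≤ B) (hη : 0 < η) (a b t : ℝ) (ha : 1 ≤ a) (hab : a ≤ b)
    (hbt : b ≤ t) (h : ∀ s ∈ Icc a b, f s ≤ B * s) :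
    ∫ s in a..b, f s / s ^ 2 ≤ η * Real.log (b / a) + max 1 (η ^ (1 - α)) * B *
      a ^ (-(1 + γ + α)) * ∫ s in (1:ℝ)..t, s ^ γ * (f s) ^ α := by
  set C := max 1 (η ^ (1 - α)) with hC
  have hC1 : 1 ≤ C := le_max_left _ _
  have h0 : ∀ s ∈ uIcc a b, s ≠ 0 := by
    intro s hs
    rw [uIcc_of_le hab] at hs
    linarith [hs.1]
  have i1 : IntervalIntegrable (fun s => f s / s ^ 2) volume a b :=
    (ContinuousOn.div hf.continuousOn (by fun_prop)
      (fun x hx => pow_ne_zero 2 (h0 x hx))).intervalIntegrable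
  have i2 : IntervalIntegrable (fun s : ℝ => η * s⁻¹) volume a b :=
    (ContinuousOn.mul continuousOn_const (continuousOn_id.inv₀ h0)).intervalIntegrable
  have i3 : IntervalIntegrable (fun s => s ^ γ * (f s) ^ α) volume a b :=
    (aux_cont f hf α γ hα a b ha (ha.trans hab)).intervalIntegrable
  have i4 : IntervalIntegrable (fun s => s ^ γ * (f s) ^ α) volume 1 t :=
    (aux_cont f hf α γ hα 1 t le_rfl (ha.trans (hab.trans hbt))).intervalIntegrable
  have pt : ∀ s ∈ Icc a b, f s / s ^ 2 ≤ η * s⁻¹ + C * B * a ^ (-(1 + γ + α)) *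
      (s ^ γ * (f s) ^ α) := by
    intro s hs
    have hs0 : 0 < s := by linarith [hs.1]
    have hz := aux_z η B α (f s / s) hη hB hα (div_nonneg (hf0 s) hs0.le)
      (by rw [div_le_iff₀ hs0]; exact h s hs)
    have e1 : f s / s ^ 2 = (f s / s) * s⁻¹ := by field_simp
    have e2 : (f s / s) ^ α * s⁻¹ = s ^ (-(1 + γ + α)) * (s ^ γ * (f s) ^ α) := by
      rw [Real.div_rpow (hf0 s) hs0.le, div_eq_mul_inv, ← Real.rpow_neg hs0.le,
        ← Real.rpow_neg_one s, ← mul_assoc, ← Real.rpow_add hs0, mul_assoc, ← Real.rpow_add hs0,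
        mul_comm]
      congr 2; ring
    have e3 : s ^ (-(1 + γ + α)) ≤ a ^ (-(1 + γ + α)) :=
      Real.rpow_le_rpow_of_nonpos (by linarith) hs.1 (by linarith)
    have hg : 0 ≤ s ^ γ * (f s) ^ α :=
      mul_nonneg (Real.rpow_nonneg hs0.le _) (Real.rpow_nonneg (hf0 s) _)
    calc f s / s ^ 2 = (f s / s) * s⁻¹ := e1
      _ ≤ (η + C * B * (f s / s) ^ α) * s⁻¹ := by gcongr
      _ = η * s⁻¹ + C * B * ((f s / s) ^ α * s⁻¹) := by ring
      _ = η * s⁻¹ + C * B * s ^ (-(1 + γ + α)) * (s ^ γ * (f s) ^ α) := by rw [e2]; ring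
      _ ≤ _ := by gcongr
  calc ∫ s in a..b, f s / s ^ 2 ≤ ∫ s in a..b, (η * s⁻¹ + C * B * a ^ (-(1 + γ + α)) *
      (s ^ γ * (f s) ^ α)) := intervalIntegral.integral_mono_on hab i1 (i2.add (i3.const_mul _)) pt
    _ = η * Real.log (b / a) + C * B * a ^ (-(1 + γ + α)) * ∫ s in a..b, s ^ γ * (f s) ^ α := by
      rw [intervalIntegral.integral_add i2 (i3.const_mul _), intervalIntegral.integral_const_mul,
        intervalIntegral.integral_const_mul, integral_inv_of_pos (by linarith) (by linarith)]
    _ ≤ _ := by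
      have : ∫ s in a..b, s ^ γ * (f s) ^ α ≤ ∫ s in (1:ℝ)..t, s ^ γ * (f s) ^ α := by
        apply intervalIntegral.integral_mono_interval ha hab hbt _ i4
        filter_upwards [ae_restrict_mem measurableSet_Ioc] with s hs
        have := hs.1
        exact mul_nonneg (Real.rpow_nonneg (by linarith) _) (Real.rpow_nonneg (hf0 s) _)
      gcongr

lemma det_lower (f : ℝ → ℝ) (hf : Continuous f) (hf0 : ∀ s, 0 ≤ f s) (α γ : ℝ) (hα : 0 ≤ α)
    (hγ : -α < γ) (δ : ℝ) (hδ : 0 < δ) (ε K : ℝ) (hε : 0 < ε) (hε1 : ε < 1) (hK : 1 ≤ K)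
    (h : ∀ s, 1 ≤ s → f s ≤ K * s ^ (1 + ε))
    (hX : Tendsto (fun n : ℕ => (∫ s in (1:ℝ)..Real.exp n, f s / s ^ 2) / n) atTop (nhds δ)) :
    ∃ c > 0, ∀ᶠ t in atTop, c * t ^ (1 + γ + α - ε * (2 + γ + α)) ≤
      ∫ s in (1:ℝ)..t, s ^ γ * (f s) ^ α := by
  set X : ℕ → ℝ := fun n => ∫ s in (1:ℝ)..Real.exp n, f s / s ^ 2 with hXd
  set p := 1 + γ + α with hp
  have hp0 : 0 < p := by linarith
  set η := δ / 8 with hη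
  have hη0 : 0 < η := by positivity
  set C := max 1 (η ^ (1 - α)) with hC
  have hC1 : 1 ≤ C := le_max_left _ _
  have E1 : ∀ᶠ n : ℕ in atTop, (δ - δ * ε / 8) * n ≤ X n ∧ X n ≤ (δ + δ * ε / 8) * n := by
    have hde : 0 < δ * ε / 8 := by positivity
    filter_upwards [hX.eventually (lt_mem_nhds (show δ - δ * ε / 8 < δ by linarith)),
      hX.eventually (gt_mem_nhds (show δ < δ + δ * ε / 8 by linarith)),
      eventually_gt_atTop 0] with n h1 h2 h3
    have h3' : (0:ℝ) < n := by exact_mod_cast h3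
    rw [lt_div_iff₀ h3'] at h1
    rw [div_lt_iff₀ h3'] at h2
    exact ⟨h1.le, h2.le⟩
  have T1 : Tendsto (fun t : ℝ => ⌊Real.log t⌋₊) atTop atTop :=
    tendsto_nat_floor_atTop.comp Real.tendsto_log_atTop
  have T2 : Tendsto (fun n : ℕ => ⌊(1 - ε) * (n:ℝ)⌋₊) atTop atTop :=
    tendsto_nat_floor_atTop.comp (tendsto_natCast_atTop_atTop.const_mul_atTop (by linarith))
  refine ⟨δ * ε / 4 / (C * K) * Real.exp (-2 * p), by positivity, ?_⟩
  have E2 : ∀ᶠ n : ℕ in atTop, 1 ≤ ε * (n:ℝ) :=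
    (tendsto_natCast_atTop_atTop.const_mul_atTop hε).eventually_ge_atTop 1
  filter_upwards [T1.eventually E1, (T2.comp T1).eventually E1, T1.eventually E2,
    eventually_ge_atTop 1, T1.eventually (eventually_ge_atTop 1)] with t h1 h2 h3 ht hn1
  simp only [Function.comp] at h2
  set n := ⌊Real.log t⌋₊ with hn
  set m := ⌊(1 - ε) * (n:ℝ)⌋₊ with hm
  have ht0 : 0 < t := by linarith
  have hl0 : 0 ≤ Real.log t := Real.log_nonneg ht
  have n1 : (n:ℝ) ≤ Real.log t := Nat.floor_le hl0
  have n2 : Real.log t < n + 1 := Nat.lt_floor_add_one _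
  have m1 : (m:ℝ) ≤ (1 - ε) * n := Nat.floor_le (mul_nonneg (by linarith) (Nat.cast_nonneg n))
  have m2 : (1 - ε) * n < m + 1 := Nat.lt_floor_add_one _
  have hn0 : (1:ℝ) ≤ n := by exact_mod_cast hn1
  have hmn : (m:ℝ) ≤ n := by nlinarith
  have a1 : 1 ≤ Real.exp m := Real.one_le_exp (Nat.cast_nonneg m)
  have hab : Real.exp m ≤ Real.exp n := Real.exp_le_exp.2 hmn
  have hbt : Real.exp n ≤ t := by
    calc Real.exp n ≤ Real.exp (Real.log t) := Real.exp_le_exp.2 n1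
      _ = t := Real.exp_log ht0
  have hte : 1 ≤ t ^ ε := Real.one_le_rpow ht hε.le
  have st := det_step f hf hf0 α γ hα hγ (K * t ^ ε) η (one_le_mul_of_one_le_of_one_le hK hte) hη0
    (Real.exp m) (Real.exp n) t a1 hab hbt (by
      intro s hs
      have hs0 : 0 < s := by linarith [hs.1]
      calc f s ≤ K * s ^ (1 + ε) := h s (a1.trans hs.1)
        _ = K * s ^ ε * s := by rw [Real.rpow_add hs0, Real.rpow_one]; ring
        _ ≤ K * t ^ ε * s := by
          gcongr
          exact hs.2.trans hbt)
  have hint : ∀ c : ℝ, 1 ≤ c → IntervalIntegrable (fun s => f s / s ^ 2) volume 1 c := by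
    intro c hc
    refine (ContinuousOn.div hf.continuousOn (by fun_prop)
      (fun x hx => pow_ne_zero 2 ?_)).intervalIntegrable
    rw [uIcc_of_le hc] at hx
    linarith [hx.1]
  have hdiff : ∫ s in Real.exp m..Real.exp n, f s / s ^ 2 = X n - X m := by
    rw [hXd]
    simp only
    rw [intervalIntegral.integral_interval_sub_left (hint _ (a1.trans hab)) (hint _ a1)]
  rw [hdiff, ← Real.exp_sub, Real.log_exp] at st
  set A := ∫ s in (1:ℝ)..t, s ^ γ * (f s) ^ α with hA
  have key : δ * ε / 4 ≤ C * (K * t ^ ε) * Real.exp m ^ (-p) * A := by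
    have b1 : δ * ε / 2 * n ≤ X n - X m := by
      have := h1.1
      have := h2.2
      have q : (δ + δ * ε / 8) * m ≤ (δ + δ * ε / 8) * ((1 - ε) * n) := by gcongr
      have q2 : 0 ≤ δ * ε * n * ε := by positivity
      have q3 : 0 ≤ δ * ε * n := by positivity
      nlinarith
    have b2 : η * (n - m : ℝ) ≤ δ / 8 * (2 * ε * n) := by
      rw [hη]; gcongr; linarith
    have b3 : δ * ε / 4 * 1 ≤ δ * ε / 4 * n := by gcongr
    nlinarith
  have hexp : Real.exp (-2 * p) * t ^ ((1 - ε) * p) ≤ Real.exp m ^ p := by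
    rw [Real.rpow_def_of_pos ht0, ← Real.exp_add, ← Real.exp_mul]
    apply Real.exp_le_exp.2
    have : (1 - ε) * Real.log t ≤ m + 2 := by nlinarith
    nlinarith
  have hmp : 0 < Real.exp m ^ p := by positivity
  rw [Real.rpow_neg (by positivity)] at key
  have k2 : δ * ε / 4 * Real.exp m ^ p ≤ C * K * t ^ ε * A := by
    have := mul_le_mul_of_nonneg_right key hmp.le
    calc _ ≤ _ := this
      _ = _ := by field_simp
  have hsplit : t ^ ((1 - ε) * p) = t ^ (p - ε * (2 + γ + α)) * t ^ ε := by
    rw [← Real.rpow_add ht0]; congr 1; rw [hp]; ring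
  have k3 : δ * ε / 4 * (Real.exp (-2 * p) * (t ^ (p - ε * (2 + γ + α)) * t ^ ε)) ≤
      C * K * t ^ ε * A := by
    rw [← hsplit]
    refine le_trans ?_ k2
    gcongr
  have hCK : 0 < C * K * t ^ ε := by positivity
  refine le_of_mul_le_mul_left ?_ hCK
  refine le_trans (le_of_eq ?_) k3
  field_simp

lemma det_main (f : ℝ → ℝ) (hf : Continuous f) (hf0 : ∀ s, 0 ≤ f s) (α γ : ℝ) (hα : 0 ≤ α)
    (hγ : -α < γ) (δ : ℝ) (hδ : 0 < δ)
    (h : ∀ k : ℕ, ∃ K, ∀ s, 1 ≤ s → f s ≤ K * s ^ (1 + 1 / ((k:ℝ) + 1)))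
    (hX : Tendsto (fun n : ℕ => (∫ s in (1:ℝ)..Real.exp n, f s / s ^ 2) / n) atTop (nhds δ)) :
    Tendsto (fun t : ℝ => Real.log (∫ s in (1:ℝ)..t, s ^ γ * (f s) ^ α) / Real.log t)
        atTop (nhds (1 + γ + α)) := by
  have h' : ∀ θ > 0, ∃ ε K : ℝ, 0 < ε ∧ ε < 1 ∧ ε < θ ∧ 1 ≤ K ∧ ∀ s, 1 ≤ s →
      f s ≤ K * s ^ (1 + ε) := by
    intro θ hθ
    obtain ⟨k, hk⟩ := exists_nat_one_div_lt (show 0 < min θ 1 by positivity)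
    obtain ⟨K, hK⟩ := h k
    refine ⟨1 / ((k:ℝ) + 1), max 1 K, by positivity, hk.trans_le (min_le_right _ _),
      hk.trans_le (min_le_left _ _), le_max_left _ _, fun s hs => (hK s hs).trans ?_⟩
    gcongr
    exact le_max_right _ _
  set p := 1 + γ + α with hp
  have hp0 : 0 < p := by linarith
  have hlog := Real.tendsto_log_atTop
  have small : ∀ c θ : ℝ, 0 < θ → ∀ᶠ t in atTop, |c| < θ * Real.log t := by
    intro c θ hθ
    exact (hlog.const_mul_atTop hθ).eventually_gt_atTop _
  rw [tendsto_order]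
  constructor
  · intro u hu
    obtain ⟨ε, K, e0, e1, e2, hK, hfK⟩ := h' ((p - u) / 2 / (p + 1)) (by
      have : 0 < p - u := by linarith
      positivity)
    obtain ⟨c, hc, hcA⟩ := det_lower f hf hf0 α γ hα hγ δ hδ ε K e0 e1 hK hfK hX
    filter_upwards [hcA, small (Real.log c) ((p - u) / 2) (by linarith), eventually_gt_atTop 1]
      with t h1 h2 h3
    have hl : 0 < Real.log t := Real.log_pos h3
    have ht0 : 0 < t := by linarith
    rw [lt_div_iff₀ hl]
    have h4 := Real.log_le_log (by positivity) h1
    rw [Real.log_mul hc.ne' (by positivity), Real.log_rpow ht0] at h4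
    rw [lt_div_iff₀ (by linarith)] at e2
    have h5 := neg_abs_le (Real.log c)
    have e3 : ε * (2 + γ + α) < (p - u) / 2 := by
      calc ε * (2 + γ + α) = ε * (p + 1) := by rw [hp]; ring
        _ < _ := e2
    nlinarith
  · intro u hu
    obtain ⟨ε, K, e0, e1, e2, hK, hfK⟩ := h' ((u - p) / 2 / (α + 1)) (by
      have : 0 < u - p := by linarith
      positivity)
    obtain ⟨ε', K', e0', e1', _, hK', hfK'⟩ := h' 1 (by norm_num)
    obtain ⟨c, hc, hcA⟩ := det_lower f hf hf0 α γ hα hγ δ hδ ε' K' e0' e1' hK' hfK' hX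
    filter_upwards [hcA, small (Real.log (K ^ α)) ((u - p) / 2) (by linarith),
      eventually_gt_atTop 1] with t h1 h2 h3
    have hl : 0 < Real.log t := Real.log_pos h3
    have ht0 : 0 < t := by linarith
    rw [div_lt_iff₀ hl]
    have hA0 : 0 < ∫ s in (1:ℝ)..t, s ^ γ * (f s) ^ α := lt_of_lt_of_le (by positivity) h1
    have h4 := Real.log_le_log hA0 (det_upper f hf hf0 α γ hα hγ ε K e0 (by linarith) hfK t h3.le)
    rw [Real.log_mul (by positivity) (by positivity), Real.log_rpow ht0] at h4
    rw [lt_div_iff₀ (by linarith)] at e2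
    have h5 := le_abs_self (Real.log (K ^ α))
    have e3 : α * ε < (u - p) / 2 := by nlinarith
    nlinarith

theorem stmt_13 {Ω : Type*} {m : MeasurableSpace Ω} (μ : Measure Ω) [IsProbabilityMeasure μ]
    (ℱ : Filtration ℝ m) (δ y : ℝ) (hδ : 0 < δ) (hy : 0 ≤ y)
    (Y : ℝ → Ω → ℝ) (hY : IsBESQ μ ℱ δ y Y)
    (α γ : ℝ) (hα : 0 ≤ α) (hγ : -α < γ) :
    ∀ᵐ ω ∂μ,
      Tendsto (fun t : ℝ => Real.log (∫ s in (1:ℝ)..t, s ^ γ * (Y s ω) ^ α) / Real.log t)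
        atTop (nhds (1 + γ + α)) := by
  have h1 : ∀ᵐ ω ∂μ, ∀ k : ℕ, ∃ K, ∀ s, 1 ≤ s → Y s ω ≤ K * s ^ (1 + 1 / ((k:ℝ) + 1)) :=
    ae_all_iff.2 fun k => hY.growth hδ hy _ (by positivity)
  filter_upwards [h1, hY.X_tendsto hδ hy] with ω a b
  exact det_main (fun s => Y s ω) (hY.cont ω) (fun s => hY.nonneg s ω) α γ hα hγ δ hδ a b
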